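/- Let K be a field, R a K-module, and M_{pq} : R^{⊗p} ⊗ R^{⊗q} → R (p,q ≥ 0) a family of K-multilinear operations with M_{00} = 0, M_{10} = M_{01} = id_R, and M_{p0} = 0 = M_{0q} for p,q ≥ 2, satisfying all the multibrace relations (R_{ijk}) for i,j,k ≥ 1, and let * be the induced associative unital product on the tensor module T(R) = ⊕_{n≥0} R^{⊗n}, given for p,q ≥ 1 by (x₁⊗…⊗x_p) * (y₁⊗…⊗y_q) = Σ_{k=1}^{p+q} Σ M_{i₁j₁}(x¹;y¹) ⊗ … ⊗ M_{i_kj_k}(x^k;y^k), the inner sum over sequences (i₁,…,i_k), (j₁,…,j_k) of nonnegative integers with i₁+…+i_k = p, j₁+…+j_k = q and i_t + j_t ≥ 1, with consecutive blocks x^t, y^t. Then the following are equivalent: (a) for every q ≥ 1 the subspace ⊕_{n≥q} R^{⊗n} is a right ideal of (T(R), *); (b) M_{pq} = 0 for all p ≥ 2 and all q ≥ 1. -/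

import Mathlib

open Finset

/-- The set of pairs of sequences `(i₁,…,i_k)`, `(j₁,…,j_k)` of nonnegative integers with
`i₁+⋯+i_k = p`, `j₁+⋯+j_k = q` and `i_t + j_t ≥ 1` for all `t`, encoded as functions
`Fin k → ℕ × ℕ`. -/
def Comps (k p q : ℕ) : Finset (Fin k → ℕ × ℕ) :=
  (Fintype.piFinset fun _ : Fin k => Finset.range (p + 1) ×ˢ Finset.range (q + 1)).filter
    fun c => (∑ t, (c t).1) = p ∧ (∑ t, (c t).2) = q ∧ ∀ t, 1 ≤ (c t).1 + (c t).2

/-- Offset of the `t`-th consecutive block in the first family of variables. -/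
def off1 {k : ℕ} (c : Fin k → ℕ × ℕ) (t : Fin k) : ℕ :=
  ∑ u ∈ Finset.univ.filter (fun u => u < t), (c u).1

/-- Offset of the `t`-th consecutive block in the second family of variables. -/
def off2 {k : ℕ} (c : Fin k → ℕ × ℕ) (t : Fin k) : ℕ :=
  ∑ u ∈ Finset.univ.filter (fun u => u < t), (c u).2

section

variable (K : Type*) [Field K] (V : Type*) [AddCommGroup V] [Module K V]

/-- The tensor module `T(V) = ⊕_{n≥0} V^{⊗n}`. -/
abbrev TensorModule : Type _ := DirectSum ℕ fun n => TensorPower K n V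

/-- The pure tensor `x₁ ⊗ ⋯ ⊗ x_p` in `V^{⊗p} ⊆ T(V)` (from the first `p` entries of a
sequence `x : ℕ → V`). -/
noncomputable def el (p : ℕ) (x : ℕ → V) : TensorModule K V :=
  DirectSum.of (fun n => TensorPower K n V) p (PiTensorProduct.tprod K fun i : Fin p => x i.1)

/-- The unit `1 ∈ V^{⊗0} ⊆ T(V)`. -/
noncomputable def unitEl : TensorModule K V :=
  DirectSum.of (fun n => TensorPower K n V) 0 (PiTensorProduct.tprod K fun i : Fin 0 => i.elim0)

/-- `M_{i_t j_t}(x^t; y^t)`: the multilinear operation `M` applied to the `t`-th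
consecutive blocks of the sequences `x` and `y`, as prescribed by the composition `c`. -/
noncomputable def blockValM
    (M : ∀ p q : ℕ, MultilinearMap K (fun _ : Fin p => V)
      (MultilinearMap K (fun _ : Fin q => V) V))
    {k : ℕ} (c : Fin k → ℕ × ℕ) (x y : ℕ → V) (t : Fin k) : V :=
  M (c t).1 (c t).2 (fun s => x (off1 c t + s.1)) (fun s => y (off2 c t + s.1))

/-- The multibrace relation `(R_{ijk})`. -/
def RrelM
    (M : ∀ p q : ℕ, MultilinearMap K (fun _ : Fin p => V)
      (MultilinearMap K (fun _ : Fin q => V) V))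
    (i j k : ℕ) (x y z : ℕ → V) : Prop :=
  ∑ l ∈ Finset.Icc 1 (i + j), ∑ c ∈ Comps l i j,
      M l k (fun t : Fin l => blockValM K V M c x y t) (fun s : Fin k => z s.1)
    = ∑ m ∈ Finset.Icc 1 (j + k), ∑ c ∈ Comps m j k,
        M i m (fun s : Fin i => x s.1) (fun t : Fin m => blockValM K V M c y z t)

/-!
The component of `(x₁ ⊗ ⋯ ⊗ x_p) * (y₁ ⊗ ⋯ ⊗ y_q)` in degree `k` is the sum over the compositions
of `(p, q)` into `k` blocks. In degree `1` it is `M_{pq}(x; y)`, so if `p ≥ 2` and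
`⊕_{n≥2} V^{⊗n}` is a right ideal, then `M_{pq}` vanishes. Conversely, if `k < p`, then some block
has `i_t ≥ 2`; if all operations with at least two left arguments vanish, the product therefore has
no component in degree less than `p`.
-/

theorem mem_Comps {k p q : ℕ} {c : Fin k → ℕ × ℕ} :
    c ∈ Comps k p q ↔
      ∑ t, (c t).1 = p ∧ ∑ t, (c t).2 = q ∧ ∀ t, 1 ≤ (c t).1 + (c t).2 := by
  refine ⟨fun hc => (mem_filter.mp hc).2, fun hc => mem_filter.mpr ⟨?_, hc⟩⟩
  obtain ⟨rfl, rfl, -⟩ := hc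
  simp only [Fintype.mem_piFinset, mem_product, mem_range, Nat.lt_succ_iff]
  exact fun t => ⟨single_le_sum_of_canonicallyOrdered (f := fun t => (c t).1) (mem_univ t),
    single_le_sum_of_canonicallyOrdered (f := fun t => (c t).2) (mem_univ t)⟩

theorem le_add_of_mem_Comps {k p q : ℕ} {c : Fin k → ℕ × ℕ} (hc : c ∈ Comps k p q) :
    k ≤ p + q := by
  obtain ⟨rfl, rfl, hpos⟩ := mem_Comps.mp hc
  calc k = ∑ _t : Fin k, 1 := by simp
    _ ≤ ∑ t, ((c t).1 + (c t).2) := sum_le_sum fun t _ => hpos t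
    _ = ∑ t, (c t).1 + ∑ t, (c t).2 := sum_add_distrib

theorem Comps_zero_eq_empty {p q : ℕ} (h : 1 ≤ p + q) : Comps 0 p q = ∅ := by
  refine eq_empty_of_forall_notMem fun c hc => ?_
  obtain ⟨hp, hq, -⟩ := mem_Comps.mp hc
  rw [Fin.sum_univ_zero] at hp hq
  omega

theorem Comps_one {p q : ℕ} (h : 1 ≤ p + q) : Comps 1 p q = {fun _ => (p, q)} := by
  ext c
  simp only [mem_Comps, Fin.forall_fin_one, Fin.sum_univ_one, mem_singleton, funext_iff,
    Prod.ext_iff]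
  omega

theorem exists_two_le_fst_of_mem_Comps {k p q : ℕ} {c : Fin k → ℕ × ℕ} (hc : c ∈ Comps k p q)
    (hkp : k < p) : ∃ t, 2 ≤ (c t).1 := by
  have hsum : ∑ _t : Fin k, 1 < ∑ t, (c t).1 := by
    simpa [(mem_Comps.mp hc).1] using hkp
  obtain ⟨t, -, ht⟩ := exists_lt_of_sum_lt hsum
  exact ⟨t, ht⟩

theorem tprod_eq_zero_iff_of_subsingleton {R ι N : Type*} [CommSemiring R] [Subsingleton ι]
    [AddCommMonoid N] [Module R N] (i : ι) (x : ι → N) :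
    PiTensorProduct.tprod R x = 0 ↔ x i = 0 := by
  classical
  rw [← (PiTensorProduct.subsingletonEquiv i).map_eq_zero_iff,
    PiTensorProduct.subsingletonEquiv_apply_tprod]

section

variable {K V}

section TensorModule

variable (K V) in
/-- The submodule `⊕_{n≥Q} V^{⊗n}` of `T(V)`, encoded by the vanishing of the components of degree
less than `Q`. -/
def degreeGE (Q : ℕ) : Submodule K (TensorModule K V) where
  carrier := {a | ∀ n, n < Q → a n = 0}
  add_mem' ha hb n hn := by rw [DirectSum.add_apply, ha n hn, hb n hn, add_zero]
  zero_mem' _ _ := rfl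
  smul_mem' r a ha n hn := by rw [DirectSum.smul_apply, ha n hn, smul_zero]

variable (K V) in
theorem degreeGE_zero : degreeGE K V 0 = ⊤ :=
  eq_top_iff.mpr fun _ _ n hn => absurd hn n.not_lt_zero

variable (K V) in
theorem degreeGE_antitone : Antitone (degreeGE K V) :=
  fun _ _ h _ ha n hn => ha n (hn.trans_le h)

theorem el_mem_degreeGE (p : ℕ) (x : ℕ → V) : el K V p x ∈ degreeGE K V p :=
  fun _ hn => DirectSum.of_eq_of_ne _ _ _ hn.ne

theorem el_zero (x : ℕ → V) : el K V 0 x = unitEl K V := by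
  rw [el, unitEl]
  congr 2
  exact Subsingleton.elim _ _

variable (K V) in
theorem range_lof_eq_span_el (p : ℕ) :
    LinearMap.range (DirectSum.lof K ℕ (fun n => TensorPower K n V) p)
      = Submodule.span K (Set.range (el K V p)) := by
  have hrange : Set.range (el K V p) = DirectSum.lof K ℕ (fun n => TensorPower K n V) p ''
      Set.range (PiTensorProduct.tprod K) := by
    rw [← Set.range_comp, ← (Fin.val_injective.surjective_comp_right (γ := V)).range_comp]
    rfl
  rw [hrange, Submodule.span_image, PiTensorProduct.span_tprod_eq_top, LinearMap.range_eq_map]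

variable (K V) in
theorem degreeGE_eq_span_el (Q : ℕ) :
    degreeGE K V Q = Submodule.span K {a | ∃ p, Q ≤ p ∧ ∃ x, el K V p x = a} := by
  classical
  apply le_antisymm
  · intro a ha
    rw [← DirectSum.sum_support_of a]
    refine Submodule.sum_mem _ fun p hp => ?_
    have hQp : Q ≤ p := not_lt.mp fun h => DFinsupp.mem_support_iff.mp hp (ha p h)
    have hspan : DirectSum.lof K ℕ (fun n => TensorPower K n V) p (a p)
        ∈ Submodule.span K (Set.range (el K V p)) :=
      range_lof_eq_span_el K V p ▸ LinearMap.mem_range_self _ _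
    refine Submodule.span_mono ?_ hspan
    rintro _ ⟨x, rfl⟩
    exact ⟨p, hQp, x, rfl⟩
  · rw [Submodule.span_le]
    rintro _ ⟨p, hQp, x, rfl⟩
    exact degreeGE_antitone K V hQp (el_mem_degreeGE p x)

theorem map₂_degreeGE_le_iff {N : Type*} [AddCommMonoid N] [Module K N]
    (f : TensorModule K V →ₗ[K] TensorModule K V →ₗ[K] N) {P Q : ℕ} {W : Submodule K N} :
    Submodule.map₂ f (degreeGE K V P) (degreeGE K V Q) ≤ W ↔
      ∀ p q, P ≤ p → Q ≤ q → ∀ x y, f (el K V p x) (el K V q y) ∈ W := by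
  rw [degreeGE_eq_span_el, degreeGE_eq_span_el, Submodule.map₂_span_span, Submodule.span_le,
    Set.image2_subset_iff]
  constructor
  · intro h p q hp hq x y
    exact h _ ⟨p, hp, x, rfl⟩ _ ⟨q, hq, y, rfl⟩
  · rintro h _ ⟨p, hp, x, rfl⟩ _ ⟨q, hq, y, rfl⟩
    exact h p q hp hq x y

end TensorModule

section MultibraceProduct

variable {M : ∀ p q : ℕ, MultilinearMap K (fun _ : Fin p => V)
  (MultilinearMap K (fun _ : Fin q => V) V)}

variable (M) in
/-- The product `(x₁ ⊗ ⋯ ⊗ x_p) * (y₁ ⊗ ⋯ ⊗ y_q)` that the operations `M` induce on pure tensors of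
positive degree. For `p = 0` or `q = 0` it need not be the product with the unit. -/
noncomputable def multibraceProd (p q : ℕ) (x y : ℕ → V) : TensorModule K V :=
  ∑ k ∈ Icc 1 (p + q), ∑ c ∈ Comps k p q,
    DirectSum.of (fun n => TensorPower K n V) k
      (PiTensorProduct.tprod K fun t : Fin k => blockValM K V M c x y t)

variable (M) in
theorem multibraceProd_apply {p q : ℕ} (h : 1 ≤ p + q) (x y : ℕ → V) (n : ℕ) :
    multibraceProd M p q x y n
      = ∑ c ∈ Comps n p q, PiTensorProduct.tprod K fun t => blockValM K V M c x y t := by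
  simp only [multibraceProd, ← map_sum]
  rw [DirectSum.sum_apply, sum_eq_single n]
  · exact DirectSum.of_eq_same _ _
  · exact fun k _ hk => DirectSum.of_eq_of_ne _ _ _ hk.symm
  · intro hn
    have hempty : Comps n p q = ∅ := by
      rcases n.eq_zero_or_pos with rfl | hn0
      · exact Comps_zero_eq_empty h
      · exact eq_empty_of_forall_notMem fun c hc =>
          hn (mem_Icc.mpr ⟨hn0, le_add_of_mem_Comps hc⟩)
    rw [hempty, sum_empty, map_zero, DirectSum.zero_apply]

theorem blockValM_const_one (p q : ℕ) (x y : ℕ → V) (t : Fin 1) :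
    blockValM K V M (fun _ => (p, q)) x y t = M p q (x ∘ Fin.val) (y ∘ Fin.val) := by
  simp [blockValM, off1, off2, Subsingleton.elim _ t, Function.comp_def]

theorem multibraceProd_apply_one_eq_zero_iff {p q : ℕ} (h : 1 ≤ p + q) (x y : ℕ → V) :
    multibraceProd M p q x y 1 = 0 ↔ M p q (x ∘ Fin.val) (y ∘ Fin.val) = 0 := by
  rw [multibraceProd_apply M h, Comps_one h, sum_singleton,
    tprod_eq_zero_iff_of_subsingleton 0, blockValM_const_one]

theorem eq_zero_of_multibraceProd_mem_degreeGE_two {p q : ℕ} (hpq : 1 ≤ p + q)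
    (h : ∀ x y, multibraceProd M p q x y ∈ degreeGE K V 2) : M p q = 0 := by
  ext x y
  obtain ⟨x, rfl⟩ := Fin.val_injective.surjective_comp_right x
  obtain ⟨y, rfl⟩ := Fin.val_injective.surjective_comp_right y
  exact (multibraceProd_apply_one_eq_zero_iff hpq x y).mp (h x y 1 one_lt_two)

theorem multibraceProd_mem_degreeGE (hM : ∀ i j, 2 ≤ i → M i j = 0) (p q : ℕ) (x y : ℕ → V) :
    multibraceProd M p q x y ∈ degreeGE K V p := by
  intro n hn
  rw [multibraceProd_apply M (by omega)]
  refine sum_eq_zero fun c hc => ?_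
  obtain ⟨t, ht⟩ := exists_two_le_fst_of_mem_Comps hc hn
  have hblock : blockValM K V M c x y t = 0 := by
    rw [blockValM, hM _ _ ht, zero_apply, zero_apply]
  exact (PiTensorProduct.tprod K).map_coord_zero t hblock

theorem rightSided_iff_Mpq_vanish_general (hMp0 : ∀ p, 2 ≤ p → M p 0 = 0)
    (star : TensorModule K V →ₗ[K] TensorModule K V →ₗ[K] TensorModule K V)
    (hunit_right : ∀ a : TensorModule K V, star a (unitEl K V) = a)
    (hform : ∀ p q : ℕ, 1 ≤ p → 1 ≤ q → ∀ x y : ℕ → V,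
      star (el K V p x) (el K V q y) = multibraceProd M p q x y) :
    (∀ Q : ℕ, 1 ≤ Q → ∀ a b : TensorModule K V,
        (∀ n, n < Q → a n = 0) → ∀ n, n < Q → (star a b) n = 0)
    ↔ (∀ p q : ℕ, 2 ≤ p → 1 ≤ q → M p q = 0) := by
  constructor
  · intro h p q hp hq
    refine eq_zero_of_multibraceProd_mem_degreeGE_two (by omega) fun x y => ?_
    rw [← hform p q (by omega) hq]
    exact h 2 one_le_two _ _ (degreeGE_antitone K V hp (el_mem_degreeGE p x))
  · intro h Q hQ a b ha
    have hM : ∀ p q, 2 ≤ p → M p q = 0 := fun p q hp =>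
      q.eq_zero_or_pos.elim (fun hq => hq ▸ hMp0 p hp) (h p q hp)
    have hstar : Submodule.map₂ star (degreeGE K V Q) (degreeGE K V 0) ≤ degreeGE K V Q := by
      refine (map₂_degreeGE_le_iff star).mpr fun p q hQp _ x y => degreeGE_antitone K V hQp ?_
      rcases q.eq_zero_or_pos with rfl | hq
      · rw [el_zero, hunit_right]
        exact el_mem_degreeGE p x
      · rw [hform p q (hQ.trans hQp) hq]
        exact multibraceProd_mem_degreeGE hM p q x y
    exact Submodule.map₂_le.mp hstar a ha b (degreeGE_zero K V ▸ Submodule.mem_top)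

end MultibraceProduct

end

/-- Let `M_{pq}` be a multibrace structure on `V` (boundary conditions
plus all relations `(R_{ijk})`), and let `*` be the induced associative unital product on
the tensor module `T(V)`. Then `⊕_{n≥q} V^{⊗n}` is a right ideal of `(T(V), *)` for every
`q ≥ 1` if and only if `M_{pq} = 0` for all `p ≥ 2` and `q ≥ 1`. -/
theorem rightSided_iff_Mpq_vanish
    (M : ∀ p q : ℕ, MultilinearMap K (fun _ : Fin p => V)
      (MultilinearMap K (fun _ : Fin q => V) V))
    (hM00 : M 0 0 = 0)
    (hM10 : ∀ (x : Fin 1 → V) (y : Fin 0 → V), M 1 0 x y = x 0)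
    (hM01 : ∀ (x : Fin 0 → V) (y : Fin 1 → V), M 0 1 x y = y 0)
    (hMp0 : ∀ p, 2 ≤ p → M p 0 = 0)
    (hM0q : ∀ q, 2 ≤ q → M 0 q = 0)
    (hR : ∀ i j k : ℕ, 1 ≤ i → 1 ≤ j → 1 ≤ k → ∀ x y z : ℕ → V, RrelM K V M i j k x y z)
    (star : TensorModule K V →ₗ[K] TensorModule K V →ₗ[K] TensorModule K V)
    (hassoc : ∀ a b c : TensorModule K V, star (star a b) c = star a (star b c))
    (hunit_left : ∀ a : TensorModule K V, star (unitEl K V) a = a)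
    (hunit_right : ∀ a : TensorModule K V, star a (unitEl K V) = a)
    (hform : ∀ p q : ℕ, 1 ≤ p → 1 ≤ q → ∀ x y : ℕ → V,
      star (el K V p x) (el K V q y)
        = ∑ k ∈ Finset.Icc 1 (p + q), ∑ c ∈ Comps k p q,
            DirectSum.of (fun n => TensorPower K n V) k
              (PiTensorProduct.tprod K fun t : Fin k => blockValM K V M c x y t)) :
    (∀ Q : ℕ, 1 ≤ Q → ∀ a b : TensorModule K V,
        (∀ n, n < Q → a n = 0) → ∀ n, n < Q → (star a b) n = 0)
    ↔ (∀ p q : ℕ, 2 ≤ p → 1 ≤ q → M p q = 0) :=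
  rightSided_iff_Mpq_vanish_general hMp0 star hunit_right hform

end
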